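/- Let n ≥ 2 and let f be the symmetric quartic form on ℝⁿ determined by real coefficients a, b, c, d, e. For r ∈ {1, …, n−1}, set s = n − r and define A_r = r[a + (b+c)r + dr² + er³], B_r = rs(b + 2dr + 4er²), C_r = rs[2c + d(r+s) + 6ers], D_r = rs(b + 2ds + 4es²), E_r = s[a + (b+c)s + ds² + es³], Δ_r = −108A_r²D_r² + 4A_rC_r(27B_rD_r − 8C_r²) − 9B_r²(3B_rD_r − C_r²), G_r = 768A_r³E_r − 64A_r²(3B_rD_r + 2C_r²) + 144A_rB_r²C_r − 27B_r⁴, H_r = 384A_r³E_r² − 8A_r²(24B_rD_rE_r + 16C_r²E_r − 9C_rD_r²) + A_r(144B_r²C_rE_r − 3B_r²D_r² − 40B_rC_r²D_r + 8C_r⁴) − B_r²(27B_r²E_r − 9B_rC_rD_r + 2C_r³), and K_r = 256A_r³E_r³ − 192A_r²B_rD_rE_r² − 128A_r²C_r²E_r² + 144A_r²C_rD_r²E_r − 27A_r²D_r⁴ + 144A_rB_r²C_rE_r² − 6A_rB_r²D_r²E_r − 80A_rB_rC_r²D_rE_r + 18A_rB_rC_rD_r³ + 16A_rC_r⁴E_r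 − 4A_rC_r³D_r² − 27B_r⁴E_r² + 18B_r³C_rD_rE_r − 4B_r³D_r³ − 4B_r²C_r³E_r + B_r²C_r²D_r². Then f(x) ≥ 0 for every x ∈ ℝⁿ if and only if both: (i) f(1_k, 0_{n−k}) ≥ 0 for every k ∈ {1,…,n}; and (ii) for every r ∈ {1,…,n−1}, either (K_r ≥ 0 and Δ_r < 0) or (G_r ≥ 0 and H_r ≥ 0 and K_r ≥ 0). -/

import Mathlib

open Finset

/-- The `k`-th power sum of `x ∈ ℝⁿ`. -/
noncomputable def powSum (n : ℕ) (k : ℕ) (x : Fin n → ℝ) : ℝ := ∑ i, x i ^ k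

/-- The symmetric quartic form with coefficients `a, b, c, d, e`. -/
noncomputable def quarticF (n : ℕ) (a b c d e : ℝ) (x : Fin n → ℝ) : ℝ :=
  a * powSum n 4 x + b * powSum n 3 x * powSum n 1 x + c * (powSum n 2 x) ^ 2
    + d * powSum n 2 x * (powSum n 1 x) ^ 2 + e * (powSum n 1 x) ^ 4

/-- The point `(1_k, 0_{n−k}) ∈ ℝⁿ`. -/
noncomputable def onesPt (n k : ℕ) : Fin n → ℝ := fun i => if (i : ℕ) < k then 1 else 0

noncomputable def cA (a b c d e : ℝ) (r : ℕ) : ℝ :=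
  (r : ℝ) * (a + (b + c) * (r : ℝ) + d * (r : ℝ) ^ 2 + e * (r : ℝ) ^ 3)

noncomputable def cB (b d e : ℝ) (r s : ℕ) : ℝ :=
  (r : ℝ) * (s : ℝ) * (b + 2 * d * (r : ℝ) + 4 * e * (r : ℝ) ^ 2)

noncomputable def cC (c d e : ℝ) (r s : ℕ) : ℝ :=
  (r : ℝ) * (s : ℝ) * (2 * c + d * ((r : ℝ) + (s : ℝ)) + 6 * e * (r : ℝ) * (s : ℝ))

noncomputable def cD (b d e : ℝ) (r s : ℕ) : ℝ :=
  (r : ℝ) * (s : ℝ) * (b + 2 * d * (s : ℝ) + 4 * e * (s : ℝ) ^ 2)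

noncomputable def cE (a b c d e : ℝ) (s : ℕ) : ℝ :=
  (s : ℝ) * (a + (b + c) * (s : ℝ) + d * (s : ℝ) ^ 2 + e * (s : ℝ) ^ 3)

/-- `Δ` of the quartic with coefficients `A B C D E` (discriminant of the derivative,
up to a positive factor). -/
noncomputable def qΔ (A B C D : ℝ) : ℝ :=
  -108 * A ^ 2 * D ^ 2 + 4 * A * C * (27 * B * D - 8 * C ^ 2)
    - 9 * B ^ 2 * (3 * B * D - C ^ 2)

noncomputable def qG (A B C D E : ℝ) : ℝ :=
  768 * A ^ 3 * E - 64 * A ^ 2 * (3 * B * D + 2 * C ^ 2) + 144 * A * B ^ 2 * C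
    - 27 * B ^ 4

noncomputable def qH (A B C D E : ℝ) : ℝ :=
  384 * A ^ 3 * E ^ 2 - 8 * A ^ 2 * (24 * B * D * E + 16 * C ^ 2 * E - 9 * C * D ^ 2)
    + A * (144 * B ^ 2 * C * E - 3 * B ^ 2 * D ^ 2 - 40 * B * C ^ 2 * D + 8 * C ^ 4)
    - B ^ 2 * (27 * B ^ 2 * E - 9 * B * C * D + 2 * C ^ 3)

noncomputable def qK (A B C D E : ℝ) : ℝ :=
  256 * A ^ 3 * E ^ 3 - 192 * A ^ 2 * B * D * E ^ 2 - 128 * A ^ 2 * C ^ 2 * E ^ 2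
    + 144 * A ^ 2 * C * D ^ 2 * E - 27 * A ^ 2 * D ^ 4 + 144 * A * B ^ 2 * C * E ^ 2
    - 6 * A * B ^ 2 * D ^ 2 * E - 80 * A * B * C ^ 2 * D * E + 18 * A * B * C * D ^ 3
    + 16 * A * C ^ 4 * E - 4 * A * C ^ 3 * D ^ 2 - 27 * B ^ 4 * E ^ 2
    + 18 * B ^ 3 * C * D * E - 4 * B ^ 3 * D ^ 3 - 4 * B ^ 2 * C ^ 3 * E
    + B ^ 2 * C ^ 2 * D ^ 2

/-- Value of a quartic. -/
noncomputable def qV (A B C D E t : ℝ) : ℝ := A * t ^ 4 + B * t ^ 3 + C * t ^ 2 + D * t + E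

lemma qV_exists_min (A B C D E : ℝ) (hA : 0 < A) :
    ∃ m, ∀ t, qV A B C D E m ≤ qV A B C D E t := by
  set R : ℝ := 1 + (|B| + |C| + |D|) / A with hR
  have hR1 : 1 ≤ R := by
    have : 0 ≤ (|B| + |C| + |D|) / A := by positivity
    linarith
  have hcont : Continuous (fun t => qV A B C D E t) := by
    unfold qV; fun_prop
  obtain ⟨m, hm, hmin⟩ := (isCompact_Icc (a := -R) (b := R)).exists_isMinOn
    ⟨0, by constructor <;> linarith⟩ hcont.continuousOn
  have hmin' : ∀ t ∈ Set.Icc (-R) R, qV A B C D E m ≤ qV A B C D E t := fun t ht => hmin ht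
  refine ⟨m, fun t => ?_⟩
  by_cases ht : t ∈ Set.Icc (-R) R
  · exact hmin' t ht
  · have h0 := hmin' 0 ⟨by linarith, by linarith⟩
    have hu : R ≤ |t| := by
      by_contra hlt
      push Not at hlt
      exact ht ⟨(abs_lt.mp hlt).1.le, (abs_lt.mp hlt).2.le⟩
    have hRA : A * R = A + (|B| + |C| + |D|) := by
      rw [hR]; field_simp
    set u := |t| with hudef
    have hu1 : 1 ≤ u := le_trans hR1 hu
    have hAu : |B| + |C| + |D| ≤ A * u := by
      have := mul_le_mul_of_nonneg_left hu hA.le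
      linarith
    have h4 : t ^ 4 = u ^ 4 := by
      rw [hudef, show (4 : ℕ) = 2 * 2 from rfl, pow_mul, pow_mul, sq_abs]
    have hB : -(|B| * u ^ 3) ≤ B * t ^ 3 := by
      have := neg_abs_le (B * t ^ 3)
      rwa [abs_mul, abs_pow] at this
    have hC : -(|C| * u ^ 3) ≤ C * t ^ 2 := by
      have := neg_abs_le (C * t ^ 2)
      rw [abs_mul, abs_pow] at this
      have h2 : u ^ 2 ≤ u ^ 3 := pow_le_pow_right₀ hu1 (by norm_num)
      have := mul_le_mul_of_nonneg_left h2 (abs_nonneg C)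
      linarith
    have hD : -(|D| * u ^ 3) ≤ D * t := by
      have := neg_abs_le (D * t)
      rw [abs_mul] at this
      have h2 : u ≤ u ^ 3 := le_self_pow₀ hu1 (by norm_num)
      have := mul_le_mul_of_nonneg_left h2 (abs_nonneg D)
      linarith
    have h3 : 0 ≤ (A * u - (|B| + |C| + |D|)) * u ^ 3 :=
      mul_nonneg (by linarith) (by positivity)
    unfold qV at h0 ⊢
    rw [h4]
    nlinarith

lemma qV_crit (A B C D E m : ℝ) (h : ∀ t, qV A B C D E m ≤ qV A B C D E t) :
    4 * A * m ^ 3 + 3 * B * m ^ 2 + 2 * C * m + D = 0 := by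
  have hd : HasDerivAt (fun t => qV A B C D E t)
      (4 * A * m ^ 3 + 3 * B * m ^ 2 + 2 * C * m + D) m := by
    unfold qV
    have h4 := (hasDerivAt_pow 4 m).const_mul A
    have h3 := (hasDerivAt_pow 3 m).const_mul B
    have h2 := (hasDerivAt_pow 2 m).const_mul C
    have h1 := (hasDerivAt_id' m).const_mul D
    have := (((h4.add h3).add h2).add h1).add_const E
    refine HasDerivAt.congr_deriv this ?_
    push_cast
    ring
  have hl : IsLocalMin (fun t => qV A B C D E t) m := Filter.Eventually.of_forall h
  exact hl.hasDerivAt_eq_zero hd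

lemma esymm_nonneg {x y z : ℝ} (h1 : 0 ≤ x + y + z) (h2 : 0 ≤ x * y + y * z + z * x)
    (h3 : 0 ≤ x * y * z) : 0 ≤ x := by
  by_contra hx
  push Not at hx
  have e : x ^ 3 - (x + y + z) * x ^ 2 + (x * y + y * z + z * x) * x - x * y * z = 0 := by ring
  have a1 : x ^ 3 < 0 := by
    have : 0 < x ^ 2 := by nlinarith
    nlinarith
  have a2 : 0 ≤ (x + y + z) * x ^ 2 := by positivity
  have a3 : (x * y + y * z + z * x) * x ≤ 0 := mul_nonpos_of_nonneg_of_nonpos h2 hx.le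
  linarith

lemma real_case (A B C D E x y z : ℝ)
    (hB : B = -(4 / 3) * A * (x + y + z)) (hC : C = 2 * A * (x * y + y * z + z * x))
    (hD : D = -4 * A * (x * y * z)) :
    qG A B C D E = 256 * A ^ 3 * (qV A B C D E x + qV A B C D E y + qV A B C D E z) ∧
    qH A B C D E = 128 * A ^ 3 * (qV A B C D E x * qV A B C D E y +
      qV A B C D E y * qV A B C D E z + qV A B C D E z * qV A B C D E x) ∧
    qK A B C D E = 256 * A ^ 3 * (qV A B C D E x * qV A B C D E y * qV A B C D E z) := by
  subst hB hC hD
  unfold qG qH qK qV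
  refine ⟨by ring, by ring, by ring⟩

lemma complex_K (A B C D E c p g : ℝ)
    (hB : B = 4 / 3 * A * (p - c)) (hC : C = 2 * A * (g - c * p))
    (hD : D = -4 * A * (c * g)) :
    qK A B C D E = 256 * A ^ 3 * qV A B C D E c *
      ((-A * (p ^ 2 - g) * g + B * p * g - C * g + E - p / 2 * (A / 3 * (p ^ 2 - 4 * g) * (p + 2 * c))) ^ 2
        + (g - p ^ 2 / 4) * (A / 3 * (p ^ 2 - 4 * g) * (p + 2 * c)) ^ 2) ∧
    qΔ A B C D = 64 * A ^ 4 * (p ^ 2 - 4 * g) * (c ^ 2 + p * c + g) ^ 2 := by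
  subst hB hC hD
  unfold qK qΔ qV
  refine ⟨by ring, by ring⟩

lemma sq_aux (P V S γ M : ℝ) (hP : 0 < P) (hγ : 0 < γ) (hV : V < 0)
    (h : 0 ≤ 256 * P * V * (S ^ 2 + γ * M ^ 2)) : M = 0 ∧ S = 0 := by
  have h1 : 256 * P * V < 0 := mul_neg_of_pos_of_neg (by positivity) hV
  have hN1 : S ^ 2 + γ * M ^ 2 ≤ 0 := by
    by_contra hN
    push Not at hN
    have := mul_neg_of_neg_of_pos h1 hN
    linarith
  have hm := mul_nonneg hγ.le (sq_nonneg M)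
  have hM2 : γ * M ^ 2 = 0 := le_antisymm (by linarith [sq_nonneg S]) hm
  have hS2 : S ^ 2 = 0 := le_antisymm (by linarith) (sq_nonneg _)
  refine ⟨?_, pow_eq_zero_iff two_ne_zero |>.mp hS2⟩
  rcases mul_eq_zero.mp hM2 with h | h
  · linarith
  · exact pow_eq_zero_iff two_ne_zero |>.mp h

lemma univ_pos (A B C D E : ℝ) (hA : 0 < A) :
    (∀ t, 0 ≤ qV A B C D E t) ↔
      ((0 ≤ qK A B C D E ∧ qΔ A B C D < 0) ∨
       (0 ≤ qG A B C D E ∧ 0 ≤ qH A B C D E ∧ 0 ≤ qK A B C D E)) := by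
  obtain ⟨c, hc⟩ := qV_exists_min A B C D E hA
  have hcr := qV_crit A B C D E c hc
  obtain ⟨p, hp⟩ : ∃ p, p = 3 * B / (4 * A) + c := ⟨_, rfl⟩
  obtain ⟨g, hg⟩ : ∃ g, g = C / (2 * A) + c * p := ⟨_, rfl⟩
  have hB : B = 4 / 3 * A * (p - c) := by rw [hp]; field_simp; ring
  have hC : C = 2 * A * (g - c * p) := by rw [hg]; field_simp; ring
  have hD : D = -4 * A * (c * g) := by
    rw [hB, hC] at hcr
    linarith
  obtain ⟨hK, hΔ⟩ := complex_K A B C D E c p g hB hC hD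
  have hiff : (∀ t, 0 ≤ qV A B C D E t) ↔ 0 ≤ qV A B C D E c :=
    ⟨fun h => h c, fun h t => h.trans (hc t)⟩
  have hA3 : 0 < A ^ 3 := by positivity
  rcases lt_or_ge (p ^ 2 - 4 * g) 0 with hneg | hpos
  · have hq : 0 < c ^ 2 + p * c + g := by nlinarith [sq_nonneg (c + p / 2)]
    have hΔneg : qΔ A B C D < 0 := by
      rw [hΔ]
      have : 0 < 64 * A ^ 4 * (c ^ 2 + p * c + g) ^ 2 := by positivity
      nlinarith
    have hKiff : 0 ≤ qV A B C D E c ↔ 0 ≤ qK A B C D E := by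
      have hgp : 0 < g - p ^ 2 / 4 := by linarith
      constructor
      · intro h
        rw [hK]
        positivity
      · intro h
        rw [hK] at h
        by_contra hlt
        push Not at hlt
        set M := A / 3 * (p ^ 2 - 4 * g) * (p + 2 * c) with hM
        set S := -A * (p ^ 2 - g) * g + B * p * g - C * g + E - p / 2 * M with hS
        obtain ⟨hM0, hS0⟩ := sq_aux _ _ _ _ _ hA3 hgp hlt h
        have hpc : p = -2 * c := by
          rw [hM] at hM0
          rcases mul_eq_zero.mp hM0 with h | h
          · rcases mul_eq_zero.mp h with h | h
            · linarith
            · linarith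
          · linarith
        rw [hS, hM0] at hS0
        have hE : E = A * (p ^ 2 - g) * g - B * p * g + C * g := by linarith
        have : qV A B C D E c = A * (g - c ^ 2) ^ 2 := by
          rw [hE, hB, hC, hD, hpc]
          unfold qV
          ring
        have : 0 ≤ qV A B C D E c := by rw [this]; positivity
        linarith
    rw [hiff, hKiff]
    constructor
    · intro h; exact Or.inl ⟨h, hΔneg⟩
    · rintro (⟨h, _⟩ | ⟨_, _, h⟩) <;> exact h
  · have hΔnn : 0 ≤ qΔ A B C D := by rw [hΔ]; positivity
    set w := Real.sqrt (p ^ 2 - 4 * g) with hw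
    have hw2 : w ^ 2 = p ^ 2 - 4 * g := Real.sq_sqrt hpos
    have hyz : (-p + w) / 2 * ((-p - w) / 2) = g := by
      have : (-p + w) / 2 * ((-p - w) / 2) = (p ^ 2 - w ^ 2) / 4 := by ring
      rw [this, hw2]; ring
    obtain ⟨y, hy⟩ : ∃ y, y = (-p + w) / 2 := ⟨_, rfl⟩
    obtain ⟨z, hz⟩ : ∃ z, z = (-p - w) / 2 := ⟨_, rfl⟩
    rw [← hy, ← hz] at hyz
    have hsum : y + z = -p := by rw [hy, hz]; ring
    obtain ⟨hG', hH', hK'⟩ := real_case A B C D E c y z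
      (by rw [hB, show c + y + z = c + (y + z) by ring, hsum]; ring)
      (by rw [hC, ← hyz, show p = -(y + z) by linarith]; ring)
      (by rw [hD, ← hyz]; ring)
    constructor
    · intro h
      right
      have := h c
      have := h y
      have := h z
      rw [hG', hH', hK']
      refine ⟨by positivity, by positivity, by positivity⟩
    · rintro (⟨_, h⟩ | ⟨h1, h2, h3⟩)
      · linarith
      · rw [hiff]
        rw [hG'] at h1
        rw [hH'] at h2
        rw [hK'] at h3
        exact esymm_nonneg (nonneg_of_mul_nonneg_right h1 (by positivity))
          (nonneg_of_mul_nonneg_right h2 (by positivity))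
          (nonneg_of_mul_nonneg_right h3 (by positivity))

lemma cond_A_zero (B C D E : ℝ)
    (h : (0 ≤ qK 0 B C D E ∧ qΔ 0 B C D < 0) ∨
       (0 ≤ qG 0 B C D E ∧ 0 ≤ qH 0 B C D E ∧ 0 ≤ qK 0 B C D E)) : B = 0 := by
  by_contra hB
  have hB2 : 0 < B ^ 2 := by positivity
  rcases h with ⟨hK, hΔ⟩ | ⟨hG, _, _⟩
  · unfold qΔ at hΔ
    unfold qK at hK
    have h1 : 0 < 3 * B * D - C ^ 2 := by
      by_contra hn
      push Not at hn
      nlinarith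
    -- 27 B² disc = 4 (C² - 3BD)³ - (27B²E - 9BCD + 2C³)²
    have e : 27 * (-27 * B ^ 4 * E ^ 2 + 18 * B ^ 3 * C * D * E - 4 * B ^ 3 * D ^ 3
        - 4 * B ^ 2 * C ^ 3 * E + B ^ 2 * C ^ 2 * D ^ 2)
        = -4 * (3 * B * D - C ^ 2) ^ 3 - (27 * B ^ 2 * E - 9 * B * C * D + 2 * C ^ 3) ^ 2 := by
      ring
    have h3 : 0 < (3 * B * D - C ^ 2) ^ 3 := by positivity
    nlinarith [sq_nonneg (27 * B ^ 2 * E - 9 * B * C * D + 2 * C ^ 3)]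
  · unfold qG at hG
    have : 0 < B ^ 4 := by positivity
    nlinarith

lemma nonneg_A (A B C D E : ℝ) (h : ∀ t, 0 ≤ qV A B C D E t) :
    0 ≤ A ∧ (A = 0 → B = 0) := by
  have key : ∀ t : ℝ, t ≠ 0 → 0 ≤ A + B * t + C * t ^ 2 + D * t ^ 3 + E * t ^ 4 := by
    intro t ht
    have h1 := h t⁻¹
    have h2 : 0 < t ^ 4 := by positivity
    have h3 := mul_nonneg h2.le h1
    have : t ^ 4 * qV A B C D E t⁻¹ = A + B * t + C * t ^ 2 + D * t ^ 3 + E * t ^ 4 := by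
      unfold qV; field_simp
    rwa [this] at h3
  have hA : 0 ≤ A := by
    have ht : Filter.Tendsto (fun t : ℝ => A + B * t + C * t ^ 2 + D * t ^ 3 + E * t ^ 4)
        (nhdsWithin 0 {0}ᶜ) (nhds A) := by
      have : Continuous (fun t : ℝ => A + B * t + C * t ^ 2 + D * t ^ 3 + E * t ^ 4) := by fun_prop
      have := this.tendsto 0
      simp at this
      exact this.mono_left nhdsWithin_le_nhds
    exact ge_of_tendsto ht (by filter_upwards [self_mem_nhdsWithin] with t ht using key t ht)
  refine ⟨hA, ?_⟩
  rintro rfl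
  have hc : Continuous (fun t : ℝ => B + C * t + D * t ^ 2 + E * t ^ 3) := by fun_prop
  have hc0 := hc.tendsto 0
  simp only [mul_zero, ne_eq, OfNat.ofNat_ne_zero, not_false_eq_true, zero_pow, add_zero] at hc0
  apply le_antisymm
  · refine le_of_tendsto (hc0.mono_left (nhdsWithin_le_nhds (s := Set.Iio 0))) ?_
    filter_upwards [self_mem_nhdsWithin] with t ht
    have ht' : t < 0 := ht
    have := key t ht'.ne
    by_contra hn
    push Not at hn
    nlinarith
  · refine ge_of_tendsto (hc0.mono_left (nhdsWithin_le_nhds (s := Set.Ioi 0))) ?_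
    filter_upwards [self_mem_nhdsWithin] with t ht
    have ht' : 0 < t := ht
    have := key t ht'.ne'
    by_contra hn
    push Not at hn
    nlinarith

lemma univ_forward (A B C D E : ℝ) (h : ∀ t, 0 ≤ qV A B C D E t) :
      ((0 ≤ qK A B C D E ∧ qΔ A B C D < 0) ∨
       (0 ≤ qG A B C D E ∧ 0 ≤ qH A B C D E ∧ 0 ≤ qK A B C D E)) := by
  obtain ⟨hA, hB⟩ := nonneg_A A B C D E h
  rcases hA.eq_or_lt with h0 | hpos
  · have hB0 := hB h0.symm
    subst h0 hB0
    right
    simp [qG, qH, qK]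
  · exact (univ_pos A B C D E hpos).mp h

/-- Homogeneous binary form nonnegativity. -/
lemma univ_backward (A B C D E : ℝ) (hA : 0 ≤ A) (hE : 0 ≤ E) (h1 : 0 ≤ A + B + C + D + E)
    (h : (0 ≤ qK A B C D E ∧ qΔ A B C D < 0) ∨
       (0 ≤ qG A B C D E ∧ 0 ≤ qH A B C D E ∧ 0 ≤ qK A B C D E))
    (h' : (0 ≤ qK E D C B A ∧ qΔ E D C B < 0) ∨
       (0 ≤ qG E D C B A ∧ 0 ≤ qH E D C B A ∧ 0 ≤ qK E D C B A)) (x y : ℝ) :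
    0 ≤ A * x ^ 4 + B * x ^ 3 * y + C * x ^ 2 * y ^ 2 + D * x * y ^ 3 + E * y ^ 4 := by
  have hhom : ∀ A B C D E : ℝ, 0 ≤ A → (∀ t, 0 ≤ qV A B C D E t) → ∀ x y : ℝ,
      0 ≤ A * x ^ 4 + B * x ^ 3 * y + C * x ^ 2 * y ^ 2 + D * x * y ^ 3 + E * y ^ 4 := by
    intro A B C D E hA hq x y
    by_cases hy : y = 0
    · subst hy
      simp
      positivity
    · have h3 : 0 ≤ y ^ 4 * qV A B C D E (x / y) := mul_nonneg (by positivity) (hq _)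
      have : y ^ 4 * qV A B C D E (x / y)
          = A * x ^ 4 + B * x ^ 3 * y + C * x ^ 2 * y ^ 2 + D * x * y ^ 3 + E * y ^ 4 := by
        unfold qV; field_simp
      rwa [this] at h3
  rcases hA.eq_or_lt with h0 | hpos
  · rcases hE.eq_or_lt with h0' | hpos'
    · subst h0 h0'
      have hB := cond_A_zero _ _ _ _ h
      have hD := cond_A_zero _ _ _ _ h'
      subst hB hD
      have : 0 ≤ C := by linarith
      have : 0 ≤ C * (x * y) ^ 2 := by positivity
      nlinarith
    · have := hhom E D C B A hE ((univ_pos E D C B A hpos').mpr h') y x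
      linarith
  · exact hhom A B C D E hA ((univ_pos A B C D E hpos).mpr h) x y

lemma perturb (u v w : ℝ) (huv : u ≠ v) (hvw : v ≠ w) (huw : u ≠ w) (σ : ℝ) (hσ : σ ≠ 0) :
    ∃ u' v' w' : ℝ, u' + v' + w' = u + v + w ∧
      u' ^ 2 + v' ^ 2 + w' ^ 2 = u ^ 2 + v ^ 2 + w ^ 2 ∧
      0 < σ * (u' * v' * w' - u * v * w) := by
  have hτ : σ * ((v - u) * (v - w)) ≠ 0 :=
    mul_ne_zero hσ (mul_ne_zero (sub_ne_zero.mpr huv.symm) (sub_ne_zero.mpr hvw))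
  set τ := σ * ((v - u) * (v - w)) with hτd
  -- use ε = k * τ with k > 0 small
  have c1 : Continuous (fun k : ℝ => (u - w) ^ 2 + 2 * (u + w) * (k * τ) - 4 * v * (k * τ)
      - 3 * (k * τ) ^ 2) := by fun_prop
  have c2 : Continuous (fun k : ℝ => τ * (σ * ((v + k * τ - u) * (v + k * τ - w)))) := by fun_prop
  have e1 : ∀ᶠ k in nhds (0 : ℝ), 0 < (u - w) ^ 2 + 2 * (u + w) * (k * τ) - 4 * v * (k * τ)
      - 3 * (k * τ) ^ 2 := by
    apply c1.tendsto 0 |>.eventually_const_lt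
    have : u - w ≠ 0 := sub_ne_zero.mpr huw
    simp
    positivity
  have e2 : ∀ᶠ k in nhds (0 : ℝ), 0 < τ * (σ * ((v + k * τ - u) * (v + k * τ - w))) := by
    apply c2.tendsto 0 |>.eventually_const_lt
    have : τ * (σ * ((v + 0 * τ - u) * (v + 0 * τ - w))) = τ ^ 2 := by rw [hτd]; ring
    rw [this]
    positivity
  have e3 : ∀ᶠ k in nhdsWithin (0 : ℝ) (Set.Ioi 0), 0 < k := self_mem_nhdsWithin
  obtain ⟨k, ⟨h1, h2⟩, h3⟩ := (((e1.and e2).filter_mono nhdsWithin_le_nhds).and e3).exists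
  obtain ⟨ε, hε⟩ : ∃ ε, ε = k * τ := ⟨_, rfl⟩
  rw [← hε] at h1 h2
  set R := Real.sqrt ((u - w) ^ 2 + 2 * (u + w) * ε - 4 * v * ε - 3 * ε ^ 2) with hR
  have hR2 : R ^ 2 = (u - w) ^ 2 + 2 * (u + w) * ε - 4 * v * ε - 3 * ε ^ 2 := Real.sq_sqrt h1.le
  refine ⟨(u + w - ε + R) / 2, v + ε, (u + w - ε - R) / 2, by ring, ?_, ?_⟩
  · have : ((u + w - ε + R) / 2) ^ 2 + (v + ε) ^ 2 + ((u + w - ε - R) / 2) ^ 2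
      = ((u + w - ε) ^ 2 + R ^ 2) / 2 + (v + ε) ^ 2 := by ring
    rw [this, hR2]; ring
  · have : (u + w - ε + R) / 2 * (v + ε) * ((u + w - ε - R) / 2)
      = ((u + w - ε) ^ 2 - R ^ 2) / 4 * (v + ε) := by ring
    rw [this, hR2]
    have e : σ * (((u + w - ε) ^ 2 - ((u - w) ^ 2 + 2 * (u + w) * ε - 4 * v * ε - 3 * ε ^ 2)) / 4
        * (v + ε) - u * v * w) = k * (τ * (σ * ((v + ε - u) * (v + ε - w)))) := by
      have : k * (τ * (σ * ((v + ε - u) * (v + ε - w))))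
        = ε * (σ * ((v + ε - u) * (v + ε - w))) := by rw [hε]; ring
      rw [this]; ring
    rw [e]
    positivity

lemma sum_upd {n : ℕ} (x : Fin n → ℝ) (i : Fin n) (u : ℝ) (g : ℝ → ℝ) :
    ∑ m, g (Function.update x i u m) = ∑ m, g (x m) - g (x i) + g u := by
  rw [← Finset.add_sum_erase _ _ (Finset.mem_univ i),
    ← Finset.add_sum_erase Finset.univ (fun m => g (x m)) (Finset.mem_univ i)]
  have : ∑ m ∈ Finset.univ.erase i, g (Function.update x i u m)
      = ∑ m ∈ Finset.univ.erase i, g (x m) := by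
    apply Finset.sum_congr rfl
    intro m hm
    rw [Function.update_of_ne (Finset.ne_of_mem_erase hm)]
  rw [this]
  simp
  ring

lemma sum_upd3 {n : ℕ} (x : Fin n → ℝ) {i j k : Fin n} (hij : i ≠ j) (hjk : j ≠ k) (hik : i ≠ k)
    (u v w : ℝ) (g : ℝ → ℝ) :
    ∑ m, g (Function.update (Function.update (Function.update x i u) j v) k w m)
      = ∑ m, g (x m) + (g u + g v + g w) - (g (x i) + g (x j) + g (x k)) := by
  rw [sum_upd, sum_upd, sum_upd]
  rw [Function.update_of_ne hjk.symm, Function.update_of_ne hik.symm,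
    Function.update_of_ne hij.symm]
  ring

/-- One perturbation step: with three distinct coordinates one can move `p₃` and `f` affinely. -/
lemma step {n : ℕ} (a b c d e : ℝ) (x : Fin n → ℝ) (i j k : Fin n)
    (hij : x i ≠ x j) (hjk : x j ≠ x k) (hik : x i ≠ x k) :
    ∃ L : ℝ, ∀ σ : ℝ, σ ≠ 0 → ∃ (y : Fin n → ℝ) (δ : ℝ), 0 < σ * δ ∧
      powSum n 1 y = powSum n 1 x ∧ powSum n 2 y = powSum n 2 x ∧
      powSum n 3 y = powSum n 3 x + 3 * δ ∧
      quarticF n a b c d e y = quarticF n a b c d e x + L * δ := by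
  refine ⟨4 * a * (x i + x j + x k) + 3 * b * powSum n 1 x, fun σ hσ => ?_⟩
  obtain ⟨u, v, w, h1, h2, h3⟩ := perturb (x i) (x j) (x k) hij hjk hik σ hσ
  have nij : i ≠ j := fun h => hij (by rw [h])
  have njk : j ≠ k := fun h => hjk (by rw [h])
  have nik : i ≠ k := fun h => hik (by rw [h])
  set y := Function.update (Function.update (Function.update x i u) j v) k w with hy
  have hs : ∀ m : ℕ, powSum n m y = powSum n m x + (u ^ m + v ^ m + w ^ m)
      - (x i ^ m + x j ^ m + x k ^ m) := by
    intro m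
    exact sum_upd3 x nij njk nik u v w (fun t => t ^ m)
  have hp1 : powSum n 1 y = powSum n 1 x := by rw [hs]; linarith
  have hp2 : powSum n 2 y = powSum n 2 x := by rw [hs]; linarith
  set X := x i
  set Y := x j
  set Z := x k
  have he2 : u * v + v * w + w * u = X * Y + Y * Z + Z * X := by
    have : (u + v + w) ^ 2 = (X + Y + Z) ^ 2 := by rw [h1]
    linarith
  have hp3 : powSum n 3 y = powSum n 3 x + 3 * (u * v * w - X * Y * Z) := by
    rw [hs]
    have i1 : u ^ 3 + v ^ 3 + w ^ 3 = (u + v + w) ^ 3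
      - 3 * (u + v + w) * (u * v + v * w + w * u) + 3 * (u * v * w) := by ring
    rw [i1, h1, he2]; ring
  have hp4 : powSum n 4 y = powSum n 4 x + 4 * (X + Y + Z) * (u * v * w - X * Y * Z) := by
    rw [hs]
    have i1 : u ^ 4 + v ^ 4 + w ^ 4 = (u + v + w) ^ 4
      - 4 * (u + v + w) ^ 2 * (u * v + v * w + w * u) + 2 * (u * v + v * w + w * u) ^ 2
      + 4 * (u + v + w) * (u * v * w) := by ring
    rw [i1, h1, he2]; ring
  refine ⟨y, u * v * w - X * Y * Z, h3, hp1, hp2, hp3, ?_⟩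
  unfold quarticF
  rw [hp1, hp2, hp3, hp4]
  ring

lemma powSum_cont (n k : ℕ) : Continuous (powSum n k) := by
  unfold powSum; fun_prop

lemma quarticF_cont (n : ℕ) (a b c d e : ℝ) : Continuous (quarticF n a b c d e) := by
  have := powSum_cont n
  unfold quarticF
  have h1 := this 1
  have h2 := this 2
  have h3 := this 3
  have h4 := this 4
  fun_prop

/-- Half degree principle. -/
lemma half_degree (n : ℕ) (a b c d e : ℝ) (x₀ : Fin n → ℝ) :
    ∃ x : Fin n → ℝ, quarticF n a b c d e x ≤ quarticF n a b c d e x₀ ∧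
      ∀ i j k, ¬ (x i ≠ x j ∧ x j ≠ x k ∧ x i ≠ x k) := by
  set S : Set (Fin n → ℝ) := {x | powSum n 1 x = powSum n 1 x₀ ∧ powSum n 2 x = powSum n 2 x₀}
    with hS
  have hSclosed : IsClosed S :=
    (isClosed_eq (powSum_cont n 1) continuous_const).inter
      (isClosed_eq (powSum_cont n 2) continuous_const)
  have hScomp : IsCompact S := by
    apply IsCompact.of_isClosed_subset
      (isCompact_univ_pi (fun _ : Fin n => isCompact_Icc
        (a := -(1 + powSum n 2 x₀)) (b := 1 + powSum n 2 x₀))) hSclosed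
    rintro x ⟨_, hx2⟩ i _
    have : x i ^ 2 ≤ powSum n 2 x :=
      Finset.single_le_sum (f := fun i => x i ^ 2) (fun _ _ => sq_nonneg _) (Finset.mem_univ i)
    rw [hx2] at this
    constructor <;> nlinarith [sq_nonneg (x i - 1), sq_nonneg (x i + 1)]
  obtain ⟨x₁, hx₁, hmin⟩ := hScomp.exists_isMinOn ⟨x₀, rfl, rfl⟩
    (quarticF_cont n a b c d e).continuousOn
  have hmin' : ∀ y ∈ S, quarticF n a b c d e x₁ ≤ quarticF n a b c d e y := fun y hy => hmin hy
  have hTcomp : IsCompact (S ∩ {x | quarticF n a b c d e x = quarticF n a b c d e x₁}) :=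
    hScomp.inter_right (isClosed_eq (quarticF_cont n a b c d e) continuous_const)
  obtain ⟨x, ⟨hxS, hxf⟩, hmax⟩ := hTcomp.exists_isMaxOn ⟨x₁, hx₁, rfl⟩
    (powSum_cont n 3).continuousOn
  have hxf' : quarticF n a b c d e x = quarticF n a b c d e x₁ := hxf
  refine ⟨x, by rw [hxf']; exact hmin' x₀ ⟨rfl, rfl⟩, ?_⟩
  rintro i j k ⟨hij, hjk, hik⟩
  obtain ⟨L, hL⟩ := step a b c d e x i j k hij hjk hik
  by_cases hL0 : L = 0
  · obtain ⟨y, δ, hδ, h1, h2, h3, h4⟩ := hL 1 one_ne_zero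
    rw [hL0, zero_mul, add_zero] at h4
    have := hmax (a := y) ⟨⟨h1.trans hxS.1, h2.trans hxS.2⟩, h4.trans hxf'⟩
    have : powSum n 3 y ≤ powSum n 3 x := this
    linarith
  · obtain ⟨y, δ, hδ, h1, h2, h3, h4⟩ := hL (-L) (neg_ne_zero.mpr hL0)
    have := hmin' y ⟨h1.trans hxS.1, h2.trans hxS.2⟩
    linarith

lemma two_values {n : ℕ} (hn : 0 < n) (x : Fin n → ℝ)
    (h : ∀ i j k, ¬ (x i ≠ x j ∧ x j ≠ x k ∧ x i ≠ x k)) :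
    ∃ α β : ℝ, ∀ i, x i = α ∨ x i = β := by
  by_cases hc : ∃ j, x j ≠ x ⟨0, hn⟩
  · obtain ⟨j, hj⟩ := hc
    refine ⟨x ⟨0, hn⟩, x j, fun i => ?_⟩
    by_contra hi
    push Not at hi
    exact h i ⟨0, hn⟩ j ⟨hi.1, hj.symm, hi.2⟩
  · push Not at hc
    exact ⟨x ⟨0, hn⟩, x ⟨0, hn⟩, fun i => Or.inl (hc i)⟩

lemma quarticF_two (n r s : ℕ) (a b c d e α β : ℝ) (x : Fin n → ℝ)
    (h : ∀ k : ℕ, powSum n k x = (r : ℝ) * α ^ k + (s : ℝ) * β ^ k) :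
    quarticF n a b c d e x = cA a b c d e r * α ^ 4 + cB b d e r s * α ^ 3 * β
      + cC c d e r s * α ^ 2 * β ^ 2 + cD b d e r s * α * β ^ 3 + cE a b c d e s * β ^ 4 := by
  unfold quarticF
  rw [h, h, h, h]
  unfold cA cB cC cD cE
  ring

lemma powSum_ite (n k m : ℕ) (hk : k ≤ n) (α β : ℝ) :
    powSum n m (fun i => if (i : ℕ) < k then α else β)
      = (k : ℝ) * α ^ m + ((n - k : ℕ) : ℝ) * β ^ m := by
  unfold powSum
  have : ∀ i : Fin n, (if (i : ℕ) < k then α else β) ^ m = if (i : ℕ) < k then α ^ m else β ^ m := by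
    intro i; split_ifs <;> rfl
  simp only [this]
  rw [Fin.sum_univ_eq_sum_range (fun i => if i < k then α ^ m else β ^ m) n,
    ← Finset.sum_range_add_sum_Ico _ hk]
  have e1 : ∑ i ∈ Finset.range k, (if i < k then α ^ m else β ^ m) = ∑ i ∈ Finset.range k, α ^ m :=
    Finset.sum_congr rfl (fun i hi => if_pos (Finset.mem_range.mp hi))
  have e2 : ∑ i ∈ Finset.Ico k n, (if i < k then α ^ m else β ^ m) = ∑ i ∈ Finset.Ico k n, β ^ m :=
    Finset.sum_congr rfl (fun i hi => if_neg (not_lt.mpr (Finset.mem_Ico.mp hi).1))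
  rw [e1, e2]
  simp

lemma powSum_two {n : ℕ} (x : Fin n → ℝ) (α β : ℝ) (h : ∀ i, x i = α ∨ x i = β) :
    ∃ r ≤ n, ∀ k : ℕ, powSum n k x = (r : ℝ) * α ^ k + ((n - r : ℕ) : ℝ) * β ^ k := by
  classical
  have hle : (Finset.univ.filter (fun i => x i = α)).card ≤ n := by
    simpa using Finset.card_le_univ (Finset.univ.filter (fun i => x i = α))
  refine ⟨_, hle, fun k => ?_⟩
  unfold powSum
  rw [← Finset.sum_filter_add_sum_filter_not Finset.univ (fun i => x i = α)]
  have e1 : ∑ i ∈ Finset.univ.filter (fun i => x i = α), x i ^ k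
      = ∑ i ∈ Finset.univ.filter (fun i => x i = α), α ^ k :=
    Finset.sum_congr rfl (fun i hi => by rw [(Finset.mem_filter.mp hi).2])
  have e2 : ∑ i ∈ Finset.univ.filter (fun i => ¬ x i = α), x i ^ k
      = ∑ i ∈ Finset.univ.filter (fun i => ¬ x i = α), β ^ k :=
    Finset.sum_congr rfl (fun i hi => by
      rw [(h i).resolve_left (Finset.mem_filter.mp hi).2])
  have hc : (Finset.univ.filter (fun i => ¬ x i = α)).card
      = n - (Finset.univ.filter (fun i => x i = α)).card := by
    have := Finset.card_filter_add_card_filter_not (s := (Finset.univ : Finset (Fin n)))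
      (fun i => x i = α)
    simp only [Finset.card_univ, Fintype.card_fin] at this
    omega
  rw [e1, e2, Finset.sum_const, Finset.sum_const, hc, nsmul_eq_mul, nsmul_eq_mul]

/-- Explicit discriminants deciding nonnegativity of a symmetric quartic on all of
`ℝⁿ` (the `QE4` algorithm). -/
theorem quartic_global_discriminants (n : ℕ) (hn : 2 ≤ n) (a b c d e : ℝ) :
    (∀ x : Fin n → ℝ, quarticF n a b c d e x ≥ 0) ↔
    ((∀ k : ℕ, 1 ≤ k → k ≤ n → quarticF n a b c d e (onesPt n k) ≥ 0) ∧
     (∀ r : ℕ, 1 ≤ r → r ≤ n - 1 →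
       let s := n - r
       let A := cA a b c d e r
       let B := cB b d e r s
       let C := cC c d e r s
       let D := cD b d e r s
       let E := cE a b c d e s
       (0 ≤ qK A B C D E ∧ qΔ A B C D < 0) ∨
       (0 ≤ qG A B C D E ∧ 0 ≤ qH A B C D E ∧ 0 ≤ qK A B C D E))) := by
  constructor
  · intro hf
    refine ⟨fun k _ _ => hf _, ?_⟩
    intro r hr1 hr2
    apply univ_forward
    intro t
    have h := hf (fun i => if (i : ℕ) < r then t else 1)
    rw [quarticF_two n r (n - r) a b c d e t 1 _
      (fun k => powSum_ite n r k (by omega) t 1)] at h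
    unfold qV
    linarith
  · rintro ⟨hk, hr⟩ x₀
    have hA : ∀ k : ℕ, 1 ≤ k → k ≤ n → 0 ≤ cA a b c d e k := by
      intro k h1 h2
      have h := hk k h1 h2
      unfold onesPt at h
      rw [quarticF_two n k (n - k) a b c d e 1 0 _
        (fun m => powSum_ite n k m h2 1 0)] at h
      linarith
    obtain ⟨x, hx, h3⟩ := half_degree n a b c d e x₀
    refine le_trans ?_ hx
    obtain ⟨α, β, hαβ⟩ := two_values (by omega) x h3
    obtain ⟨r, hrn, hps⟩ := powSum_two x α β hαβ
    rw [quarticF_two n r (n - r) a b c d e α β x hps]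
    rcases Nat.eq_zero_or_pos r with h0 | hpos
    · subst h0
      have := hA n (by omega) le_rfl
      have h2 : 0 ≤ cA a b c d e n * β ^ 4 := by positivity
      have : cE a b c d e n = cA a b c d e n := rfl
      simp only [Nat.sub_zero, this]
      have e1 : cA a b c d e 0 = 0 := by simp [cA]
      have e2 : cB b d e 0 n = 0 := by simp [cB]
      have e3 : cC c d e 0 n = 0 := by simp [cC]
      have e4 : cD b d e 0 n = 0 := by simp [cD]
      rw [e1, e2, e3, e4]
      linarith
    · rcases hrn.eq_or_lt with h0 | hlt
      · subst h0
        have := hA r hpos le_rfl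
        have h2 : 0 ≤ cA a b c d e r * α ^ 4 := by positivity
        simp only [Nat.sub_self]
        have e1 : cE a b c d e 0 = 0 := by simp [cE]
        have e2 : cB b d e r 0 = 0 := by simp [cB]
        have e3 : cC c d e r 0 = 0 := by simp [cC]
        have e4 : cD b d e r 0 = 0 := by simp [cD]
        rw [e1, e2, e3, e4]
        linarith
      · have c1 := hr r hpos (by omega)
        have c2 := hr (n - r) (by omega) (by omega)
        have hnr : n - (n - r) = r := by omega
        simp only [hnr] at c1 c2
        have hone := hk n (by omega) le_rfl
        have hones : onesPt n n = fun i : Fin n => if (i : ℕ) < r then (1 : ℝ) else 1 := by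
          funext i
          simp [onesPt]
        rw [hones, quarticF_two n r (n - r) a b c d e 1 1 _
          (fun m => powSum_ite n r m hlt.le 1 1)] at hone
        have eB : cB b d e (n - r) r = cD b d e r (n - r) := by unfold cB cD; ring
        have eC : cC c d e (n - r) r = cC c d e r (n - r) := by unfold cC; ring
        have eD : cD b d e (n - r) r = cB b d e r (n - r) := by unfold cB cD; ring
        have eA : cA a b c d e (n - r) = cE a b c d e (n - r) := rfl
        have eE : cE a b c d e r = cA a b c d e r := rfl
        rw [eA, eB, eC, eD, eE] at c2
        exact univ_backward _ _ _ _ _ (hA r hpos hlt.le)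
          (hA (n - r) (by omega) (by omega)) (by linarith) c1 c2 α β
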